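/- For every rate R > 0 the MMSE outage probability of the flat-fading MIMO channel decays at least polynomially with exponent d_out: limsup_{ρ→∞} log P_out(ρ) / log ρ ≤ −d_out(R,M,N), i.e. P_out(ρ) is exponentially upper bounded by ρ^{−d_out(R,M,N)}. -/

import Mathlib

/-!
The proof replaces the eigenvalues of `Hᴴ H` by minors of `H`.

Expanding `det (I + ρ Hᴴ H)` into principal minors gives nonnegative weights `colWeight ρ H T`
indexed by sets `T` of columns, and by Cauchy–Binet each weight is `ρ ^ #T` times a sum of squared
`#T × #T` minors of `H`. In the same way the diagonal entry `i` of `(I + ρ Hᴴ H)⁻¹` is the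
proportion of weight on sets missing `i` (`inv_diag`). By concavity of the logarithm, outage forces
the trace of the inverse above `M 2 ^ (-R / M)`, i.e. the weighted average of `M - #T` exceeds this
number (`outage_imp_error`).

Now let `(e, g)` be the rows and columns of a `k × k` minor maximizing `(ρ / L) ^ k |minor|²` over
all sizes `k`, where `L` is a large constant. If `k` were larger than `r = min M N - d`, with `d` the
ceiling in the definition of `dOut`, then the sets `T` with more than `r` elements would dominate
the average and bring it below `M 2 ^ (-R / M)`; hence `k ≤ r` on the outage event
(`pivot_rank_le`). Comparing the maximal minor with its borderings by row `i` and column `j` shows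
that each of the `(N - k) (M - k)` entries `H i j` outside the pivot rows and columns lies in a disc
of radius `√(L / ρ)` whose centre depends only on the other entries (`pivot_entries`). As the entries
are independent with bounded density, this has probability `O(ρ ^ (-(N - k) (M - k)))`
(`matrixLaw_pinned_le`), and a union bound over the finitely many `(k, e, g)` with `k ≤ r` gives
`O(ρ ^ (-(N - r) (M - r)))` (`Pout_upper`), where `(N - r) (M - r) = d² + |N - M| d`.

Since `limsup` is taken in `ℝ`, a polynomial lower bound on the outage probability is needed too:
outage occurs whenever all entries of `H` are of order `ρ ^ (-1/2)` (`Pout_lower`).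
-/

open MeasureTheory ProbabilityTheory Filter Matrix

noncomputable section

/-- Law of a single standard circularly-symmetric complex Gaussian entry, represented as
its pair (re, im) of independent `N(0, 1/2)` real Gaussians. -/
def entryLaw : Measure (ℝ × ℝ) := (gaussianReal 0 (1 / 2)).prod (gaussianReal 0 (1 / 2))

instance : IsProbabilityMeasure entryLaw := by
  unfold entryLaw; infer_instance

/-- Law of a family of i.i.d. standard complex Gaussian entries indexed by `ι`. -/
def matrixLaw (ι : Type*) [Fintype ι] : Measure (ι → ℝ × ℝ) :=
  Measure.pi fun _ => entryLaw

/-- Turn a pair of reals into a complex number. -/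
def toC (p : ℝ × ℝ) : ℂ := ⟨p.1, p.2⟩

/-- The random `N × M` channel matrix `H` with i.i.d. standard complex Gaussian entries. -/
def chan (M N : ℕ) (ω : Fin N × Fin M → ℝ × ℝ) : Matrix (Fin N) (Fin M) ℂ :=
  Matrix.of fun i j => toC (ω (i, j))

/-- MMSE per-stream SINR: `γ_k(ρ) = 1 / ((I_M + ρ H^* H)⁻¹)_{kk} − 1`. -/
def sinr (M N : ℕ) (ρ : ℝ) (ω : Fin N × Fin M → ℝ × ℝ) (k : Fin M) : ℝ :=
  1 / ((((1 : Matrix (Fin M) (Fin M) ℂ) +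
      (ρ : ℂ) • ((chan M N ω)ᴴ * chan M N ω))⁻¹ k k).re) - 1

/-- MMSE outage probability at rate `R` and SNR `ρ`:
`P_out(ρ) = Prob(∑_k log₂(1 + γ_k(ρ)) < R)`. -/
def Pout (M N : ℕ) (R ρ : ℝ) : ℝ :=
  (matrixLaw (Fin N × Fin M)
    {ω | ∑ k : Fin M, Real.logb 2 (1 + sinr M N ρ ω k) < R}).toReal

/-- `d_out(R,M,N) = ⌈(M·2^{−R/M} − (M−N)⁺)⁺⌉² + |N−M|·⌈(M·2^{−R/M} − (M−N)⁺)⁺⌉`. -/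
def dOut (R : ℝ) (M N : ℕ) : ℝ :=
  (⌈max ((M : ℝ) * 2 ^ (-(R / M)) - max ((M : ℝ) - N) 0) 0⌉ : ℝ) ^ 2
    + |(N : ℝ) - M| * (⌈max ((M : ℝ) * 2 ^ (-(R / M)) - max ((M : ℝ) - N) 0) 0⌉ : ℝ)

/-! ### Principal minors and the MMSE errors -/

/-- The principal minor of `A` with rows and columns in `T`. -/
def pminor {n : Type*} [DecidableEq n] (A : Matrix n n ℂ) (T : Finset n) : ℂ :=
  (A.submatrix (Subtype.val : T → n) (Subtype.val : T → n)).det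

lemma det_one_add_eq_sum_pminor {n : Type*} [Fintype n] [DecidableEq n] (A : Matrix n n ℂ) :
    (1 + A).det = ∑ T : Finset n, pminor A T := by
  rw [add_comm]
  change (detRowAlternating : (n → ℂ) [⋀^n]→ₗ[ℂ] ℂ) (A.row + (1 : Matrix n n ℂ).row) = _
  rw [AlternatingMap.map_add_univ]
  exact Finset.sum_congr rfl fun s _ => det_piecewise_one_eq_submatrix_det A s

/-- Deleting row `i` kills exactly the principal minors that use it. -/
lemma pminor_updateRow_zero {n : Type*} [Fintype n] [DecidableEq n] (A : Matrix n n ℂ) (i : n)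
    (T : Finset n) : pminor (A.updateRow i 0) T = if i ∈ T then 0 else pminor A T := by
  unfold pminor
  split_ifs with h
  · apply det_eq_zero_of_row_eq_zero ⟨i, h⟩
    intro j
    simp
  · congr 1
    ext a b
    have : (a : n) ≠ i := fun hh => h (hh ▸ a.2)
    simp [updateRow_ne this]

lemma adjugate_one_add_diag {n : Type*} [Fintype n] [DecidableEq n] (A : Matrix n n ℂ) (i : n) :
    (1 + A).adjugate i i = ∑ T : Finset n, if i ∈ T then 0 else pminor A T := by
  rw [adjugate_apply]
  have : (1 + A).updateRow i (Pi.single i 1) = 1 + A.updateRow i 0 := by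
    ext a b
    by_cases h : a = i
    · subst h; simp [Matrix.one_apply, Pi.single_apply, eq_comm]
    · simp [updateRow_ne h]
  rw [this, det_one_add_eq_sum_pminor]
  simp_rw [pminor_updateRow_zero]

/-- The Cauchy–Binet formula, summed over all maps `e` instead of subsets, so that every
subset is counted `k!` times. -/
lemma cauchyBinet {k n : Type*} [Fintype k] [DecidableEq k] [Fintype n] [DecidableEq n]
    (A : Matrix k n ℂ) (B : Matrix n k ℂ) :
    ((Fintype.card k).factorial : ℂ) * (A * B).det =
      ∑ e : k → n, (A.submatrix id e).det * (B.submatrix e id).det := by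
  have h1 : (A * B).det = ∑ e : k → n, (∏ i, A i (e i)) * (B.submatrix e id).det := by
    have hAB : A * B = fun i => ∑ a, A i a • B a := by
      ext i j
      simp [Matrix.mul_apply]
    change (detRowAlternating : (k → ℂ) [⋀^k]→ₗ[ℂ] ℂ) (A * B) = _
    rw [hAB]
    change (detRowAlternating : (k → ℂ) [⋀^k]→ₗ[ℂ] ℂ).toMultilinearMap _ = _
    rw [MultilinearMap.map_sum]
    refine Finset.sum_congr rfl fun e _ => ?_
    rw [MultilinearMap.map_smul_univ]
    rfl
  have h2 : ∀ σ : Equiv.Perm k, (A * B).det =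
      ∑ e : k → n, ((Equiv.Perm.sign σ : ℤ) : ℂ) * (∏ i, A i (e (σ i))) *
        (B.submatrix e id).det := by
    intro σ
    rw [h1, ← Equiv.sum_comp (Equiv.arrowCongr σ.symm (Equiv.refl n))]
    refine Finset.sum_congr rfl fun e _ => ?_
    have : (B.submatrix (e ∘ σ) id).det
        = ((Equiv.Perm.sign σ : ℤ) : ℂ) * (B.submatrix e id).det := by
      rw [← det_permute]; rfl
    have hcomp : Equiv.arrowCongr σ.symm (Equiv.refl n) e = e ∘ σ := rfl
    rw [hcomp, this]
    simp only [Function.comp_apply]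
    ring
  have h3 : ((Fintype.card k).factorial : ℂ) * (A * B).det
      = ∑ _σ : Equiv.Perm k, (A * B).det := by
    simp [Fintype.card_perm]
  rw [h3, Finset.sum_congr rfl fun σ _ => h2 σ, Finset.sum_comm]
  refine Finset.sum_congr rfl fun e _ => ?_
  rw [← Finset.sum_mul, ← det_transpose (A.submatrix id e), det_apply' (A.submatrix id e)ᵀ]
  rfl

/-- The principal minor of `ρ Hᴴ H` on the columns `T`, written by Cauchy–Binet as a sum of
squared minors of `H`. -/
def colWeight {M N : ℕ} (ρ : ℝ) (H : Matrix (Fin N) (Fin M) ℂ) (T : Finset (Fin M)) : ℝ :=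
  ρ ^ T.card / T.card.factorial *
    ∑ e : T → Fin N, ‖(H.submatrix e (Subtype.val : T → Fin M)).det‖ ^ 2

lemma pminor_eq_colWeight {M N : ℕ} (ρ : ℝ) (H : Matrix (Fin N) (Fin M) ℂ) (T : Finset (Fin M)) :
    pminor ((ρ : ℂ) • (Hᴴ * H)) T = (colWeight ρ H T : ℂ) := by
  have h := cauchyBinet (H.submatrix id (Subtype.val : T → Fin M))ᴴ
    (H.submatrix id (Subtype.val : T → Fin M))
  have h1 : pminor ((ρ : ℂ) • (Hᴴ * H)) T = (ρ : ℂ) ^ T.card *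
      ((H.submatrix id (Subtype.val : T → Fin M))ᴴ *
        (H.submatrix id (Subtype.val : T → Fin M))).det := by
    unfold pminor
    have : ((ρ : ℂ) • (Hᴴ * H)).submatrix (Subtype.val : T → Fin M) (Subtype.val : T → Fin M) =
        (ρ : ℂ) • ((H.submatrix id (Subtype.val : T → Fin M))ᴴ *
          H.submatrix id (Subtype.val : T → Fin M)) := by
      ext a b
      simp [Matrix.mul_apply]
    rw [this, det_smul, Fintype.card_coe]
  have h2 : ∀ e : T → Fin N,
      ((H.submatrix id (Subtype.val : T → Fin M))ᴴ.submatrix id e).det *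
        ((H.submatrix id (Subtype.val : T → Fin M)).submatrix e id).det
      = ((‖(H.submatrix e (Subtype.val : T → Fin M)).det‖ ^ 2 : ℝ) : ℂ) := by
    intro e
    have : (H.submatrix id (Subtype.val : T → Fin M))ᴴ.submatrix id e
        = (H.submatrix e (Subtype.val : T → Fin M))ᴴ := by ext; simp
    rw [this, det_conjTranspose]
    have : (H.submatrix id (Subtype.val : T → Fin M)).submatrix e id
        = H.submatrix e (Subtype.val : T → Fin M) := by ext; simp
    rw [this]
    simpa using RCLike.conj_mul (H.submatrix e (Subtype.val : T → Fin M)).det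
  rw [Finset.sum_congr rfl fun e _ => h2 e, Fintype.card_coe] at h
  have hf : ((T.card.factorial : ℕ) : ℂ) ≠ 0 := by exact_mod_cast T.card.factorial_ne_zero
  rw [h1, colWeight]
  push_cast at h ⊢
  rw [div_mul_eq_mul_div, ← h]
  field_simp

lemma colWeight_nonneg {M N : ℕ} {ρ : ℝ} (hρ : 0 ≤ ρ) (H : Matrix (Fin N) (Fin M) ℂ)
    (T : Finset (Fin M)) : 0 ≤ colWeight ρ H T := by
  unfold colWeight; positivity

lemma colWeight_empty {M N : ℕ} (ρ : ℝ) (H : Matrix (Fin N) (Fin M) ℂ) : colWeight ρ H ∅ = 1 := by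
  simp [colWeight]

lemma one_le_sum_colWeight {M N : ℕ} {ρ : ℝ} (hρ : 0 ≤ ρ) (H : Matrix (Fin N) (Fin M) ℂ) :
    1 ≤ ∑ T, colWeight ρ H T := by
  rw [← colWeight_empty ρ H]
  exact Finset.single_le_sum (fun T _ => colWeight_nonneg hρ H T) (Finset.mem_univ _)

/-- The MMSE error of stream `i`, i.e. the diagonal entry of `(I + ρ Hᴴ H)⁻¹`, is the total
weight of the column sets missing `i`, relative to the weight of all column sets. -/
lemma inv_diag {M N : ℕ} (ρ : ℝ) (H : Matrix (Fin N) (Fin M) ℂ) (i : Fin M) :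
    (((1 : Matrix (Fin M) (Fin M) ℂ) + (ρ : ℂ) • (Hᴴ * H))⁻¹ i i).re =
      (∑ T, if i ∈ T then 0 else colWeight ρ H T) / ∑ T, colWeight ρ H T := by
  rw [inv_def, Matrix.smul_apply, adjugate_one_add_diag, det_one_add_eq_sum_pminor]
  simp_rw [pminor_eq_colWeight]
  rw [Ring.inverse_eq_inv', smul_eq_mul, ← Complex.ofReal_sum, inv_mul_eq_div]
  have : (∑ T, if i ∈ T then (0 : ℂ) else (colWeight ρ H T : ℂ))
      = ((∑ T, if i ∈ T then 0 else colWeight ρ H T : ℝ) : ℂ) := by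
    push_cast
    exact Finset.sum_congr rfl fun T _ => by split_ifs <;> simp
  rw [this, ← Complex.ofReal_div, Complex.ofReal_re]

/-! ### Outage and the maximal minor -/

/-- The rate is below `R` only if the mean of the `M` MMSE errors exceeds `2 ^ (-R / M)`. The
conclusion is this inequality with `inv_diag` inserted and the denominator cleared. -/
lemma outage_imp_error {M N : ℕ} (hM : 1 ≤ M) {R ρ : ℝ} (hρ : 0 ≤ ρ)
    (ω : Fin N × Fin M → ℝ × ℝ)
    (h : ∑ k : Fin M, Real.logb 2 (1 + sinr M N ρ ω k) < R) :
    0 < ∑ T, ((M : ℝ) - T.card - M * 2 ^ (-(R / M))) * colWeight ρ (chan M N ω) T := by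
  set H := chan M N ω
  set Z := ∑ T, colWeight ρ H T with hZ
  have hZ1 : 1 ≤ Z := one_le_sum_colWeight hρ H
  set q : Fin M → ℝ := fun i => (∑ T, if i ∈ T then 0 else colWeight ρ H T) / Z with hq
  have hsum : ∑ i, q i = (∑ T, ((M : ℝ) - T.card) * colWeight ρ H T) / Z := by
    rw [← Finset.sum_div, Finset.sum_comm]
    congr 1
    refine Finset.sum_congr rfl fun T _ => ?_
    have : ∀ i : Fin M, (if i ∈ T then 0 else colWeight ρ H T)
        = colWeight ρ H T - if i ∈ T then colWeight ρ H T else 0 := by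
      intro i; split_ifs <;> simp
    simp_rw [this, Finset.sum_sub_distrib]
    simp
    ring
  have hqpos : ∀ i, 0 < q i := by
    intro i
    apply div_pos _ (by linarith)
    apply lt_of_lt_of_le (b := colWeight ρ H ∅)
    · rw [colWeight_empty]; norm_num
    · have := Finset.single_le_sum (f := fun T => if i ∈ T then 0 else colWeight ρ H T)
        (s := Finset.univ)
        (fun T _ => by split_ifs; exacts [le_rfl, colWeight_nonneg hρ H T])
        (Finset.mem_univ ∅)
      simpa using this
  have hsinr : ∀ i, 1 + sinr M N ρ ω i = (q i)⁻¹ := by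
    intro i
    unfold sinr
    rw [inv_diag]
    simp [q, Z, H]
  simp_rw [hsinr, Real.logb_inv] at h
  by_contra hcon
  push Not at hcon
  have hM0 : (0 : ℝ) < M := by exact_mod_cast hM
  set c : ℝ := 2 ^ (-(R / M)) with hc
  have hc0 : 0 < c := by positivity
  have hsumle : ∑ i, q i ≤ M * c := by
    rw [hsum, div_le_iff₀ (by linarith), hZ, Finset.mul_sum, ← sub_nonpos,
      ← Finset.sum_sub_distrib]
    convert hcon using 2
    ring
  -- the tangent line of `log` at `c` replaces Jensen's inequality
  have hlog : ∀ i, Real.log (q i) ≤ q i / c - 1 + Real.log c := by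
    intro i
    have := Real.log_le_sub_one_of_pos (div_pos (hqpos i) hc0)
    rw [Real.log_div (hqpos i).ne' hc0.ne'] at this
    linarith
  have hsl : ∑ i, Real.log (q i) ≤ M * Real.log c := by
    calc _ ≤ ∑ i, (q i / c - 1 + Real.log c) := Finset.sum_le_sum fun i _ => hlog i
      _ = (∑ i, q i) / c - M + M * Real.log c := by
        rw [Finset.sum_add_distrib, Finset.sum_sub_distrib, Finset.sum_div]; simp
      _ ≤ _ := by
        have : (∑ i, q i) / c ≤ M := by rw [div_le_iff₀ hc0]; exact hsumle
        linarith
  have hl2 : 0 < Real.log 2 := Real.log_pos (by norm_num)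
  have hlc : M * Real.log c = -R * Real.log 2 := by
    rw [hc, Real.log_rpow (by norm_num)]
    field_simp
  have h3 : ∑ i, -Real.logb 2 (q i) = -(∑ i, Real.log (q i)) / Real.log 2 := by
    simp_rw [Real.logb]
    rw [Finset.sum_neg_distrib, ← Finset.sum_div, neg_div]
  rw [h3, div_lt_iff₀ hl2] at h
  linarith

/-- A weighted size of the minor of `H` with rows `e` and columns `g`; a minor maximizing it is
a pivot. -/
def minorWeight {M N : ℕ} (x : ℝ) (H : Matrix (Fin N) (Fin M) ℂ) (k : ℕ) (e : Fin k → Fin N)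
    (g : Fin k → Fin M) : ℝ :=
  x ^ k * ‖(H.submatrix e g).det‖ ^ 2

lemma exists_max_minor {M N : ℕ} (x : ℝ) (H : Matrix (Fin N) (Fin M) ℂ) :
    ∃ k ≤ M, ∃ (e : Fin k → Fin N) (g : Fin k → Fin M), 1 ≤ minorWeight x H k e g ∧
      ∀ k' ≤ M, ∀ (e' : Fin k' → Fin N) (g' : Fin k' → Fin M),
        minorWeight x H k' e' g' ≤ minorWeight x H k e g := by
  let τ := Σ k : Fin (M + 1), (Fin k → Fin N) × (Fin k → Fin M)
  let z : τ := ⟨⟨0, by omega⟩, Fin.elim0, Fin.elim0⟩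
  have : Nonempty τ := ⟨z⟩
  obtain ⟨⟨k, e, g⟩, hmax⟩ := Finite.exists_max
    (fun t : τ => minorWeight x H t.1 t.2.1 t.2.2)
  refine ⟨k, by omega, e, g, ?_, fun k' hk' e' g' => hmax ⟨⟨k', by omega⟩, e', g'⟩⟩
  have := hmax z
  refine le_trans (le_of_eq ?_) this
  simp [minorWeight, z]

lemma det_submatrix_reindex {M N : ℕ} (H : Matrix (Fin N) (Fin M) ℂ) {T : Finset (Fin M)} {k : ℕ}
    (s : Fin k ≃ T) (e : T → Fin N) :
    (H.submatrix (e ∘ s) (Subtype.val ∘ s)).det = (H.submatrix e (Subtype.val : T → Fin M)).det :=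
  det_submatrix_equiv_self s (H.submatrix e Subtype.val)

/-- If the rank of the maximizing minor exceeded `r`, the column sets with more than `r` elements
would dominate the sum in `outage_imp_error` and make it negative. -/
lemma pivot_rank_le {M N : ℕ} {ρ L y δ : ℝ} {r : ℕ} (hN : 1 ≤ N) (hρ : 0 < ρ) (hL : 1 ≤ L)
    (hδ : 0 < δ) (hy : 0 ≤ y)
    (hr : (M : ℝ) - (r + 1 : ℕ) - y ≤ -δ)
    (hLbig : 2 ^ M * (M * N ^ M) * M.factorial < δ * L)
    (H : Matrix (Fin N) (Fin M) ℂ)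
    (hout : 0 < ∑ T, ((M : ℝ) - T.card - y) * colWeight ρ H T)
    {k : ℕ} (hk : k ≤ M) (e : Fin k → Fin N) (g : Fin k → Fin M)
    (h1 : 1 ≤ minorWeight (ρ / L) H k e g)
    (hmax : ∀ k' ≤ M, ∀ (e' : Fin k' → Fin N) (g' : Fin k' → Fin M),
        minorWeight (ρ / L) H k' e' g' ≤ minorWeight (ρ / L) H k e g) : k ≤ r := by
  by_contra hkr
  push Not at hkr
  set V := minorWeight (ρ / L) H k e g with hV
  have hL0 : 0 < L := by linarith
  have hN1 : (1 : ℝ) ≤ N := by exact_mod_cast hN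
  have hM0 : (0 : ℝ) ≤ M := by positivity
  -- upper bound for the weight of every column set
  have hub : ∀ T : Finset (Fin M), colWeight ρ H T ≤ N ^ M * (L ^ T.card * V) := by
    intro T
    have hcard : T.card ≤ M := by simpa using T.card_le_univ
    have hterm : ∀ e' : T → Fin N,
        ρ ^ T.card * ‖(H.submatrix e' (Subtype.val : T → Fin M)).det‖ ^ 2 ≤ L ^ T.card * V := by
      intro e'
      have := hmax T.card hcard (e' ∘ T.equivFin.symm) (Subtype.val ∘ T.equivFin.symm)
      rw [minorWeight, det_submatrix_reindex, div_pow, div_mul_eq_mul_div,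
        div_le_iff₀ (by positivity)] at this
      linarith
    calc colWeight ρ H T ≤ ρ ^ T.card *
          ∑ e' : T → Fin N, ‖(H.submatrix e' (Subtype.val : T → Fin M)).det‖ ^ 2 := by
          unfold colWeight
          gcongr
          apply div_le_self (by positivity)
          exact_mod_cast Nat.succ_le_of_lt T.card.factorial_pos
      _ ≤ ∑ _e' : T → Fin N, L ^ T.card * V := by
          rw [Finset.mul_sum]
          exact Finset.sum_le_sum fun e' _ => hterm e'
      _ = (N : ℝ) ^ T.card * (L ^ T.card * V) := by simp
      _ ≤ _ := by gcongr
  have hginj : Function.Injective g := by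
    intro a b hab
    by_contra hne
    have : (H.submatrix e g).det = 0 := det_zero_of_column_eq hne (by simp [hab])
    rw [hV, minorWeight, this] at h1
    norm_num at h1
  -- the column set of the pivot, and a lower bound for its weight
  set T₀ : Finset (Fin M) := Finset.univ.image g with hT0
  have hT0c : T₀.card = k := by
    rw [hT0, Finset.card_image_of_injective _ hginj]; simp
  let s : Fin k ≃ T₀ := Equiv.ofBijective (fun a => ⟨g a, by simp [hT0]⟩)
    ⟨fun a b hab => hginj (by simpa using hab), fun ⟨b, hb⟩ => by
      simpa [hT0] using hb⟩
  have hlb : L ^ k * V / M.factorial ≤ colWeight ρ H T₀ := by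
    have h2 := Finset.single_le_sum (s := Finset.univ)
      (f := fun e' : T₀ → Fin N => ‖(H.submatrix e' (Subtype.val : T₀ → Fin M)).det‖ ^ 2)
      (fun _ _ => by positivity) (Finset.mem_univ (e ∘ s.symm))
    have h3 : (H.submatrix (e ∘ s.symm) (Subtype.val : T₀ → Fin M)).det
        = (H.submatrix e g).det := by
      rw [← det_submatrix_reindex H s]
      congr 2
      ext; simp
    simp only [h3] at h2
    have h4 : L ^ k * V = ρ ^ k * ‖(H.submatrix e g).det‖ ^ 2 := by
      rw [hV, minorWeight, div_pow]
      field_simp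
    rw [h4, colWeight, hT0c, div_mul_eq_mul_div]
    gcongr
  have hw : ∀ T, 0 ≤ colWeight ρ H T := colWeight_nonneg hρ.le H
  have hV0 : 0 < V := by linarith
  have hterm : ∀ T : Finset (Fin M), ((M : ℝ) - T.card - y) * colWeight ρ H T ≤
      (if T = T₀ then -δ * (L ^ k * V / M.factorial) else 0) +
        M * (N ^ M * (L ^ (k - 1) * V)) := by
    intro T
    have hpos : 0 ≤ M * (N ^ M * (L ^ (k - 1) * V)) := by positivity
    by_cases hT : r + 1 ≤ T.card
    · have hcoef : (M : ℝ) - T.card - y ≤ -δ := by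
        have : ((r + 1 : ℕ) : ℝ) ≤ T.card := by exact_mod_cast hT
        linarith
      have hle : ((M : ℝ) - T.card - y) * colWeight ρ H T ≤ -δ * colWeight ρ H T :=
        mul_le_mul_of_nonneg_right hcoef (hw T)
      split_ifs with hTT
      · subst hTT
        nlinarith
      · nlinarith [hw T]
    · have hTT : T ≠ T₀ := by rintro rfl; omega
      rw [if_neg hTT, zero_add]
      have hTk : T.card ≤ k - 1 := by omega
      calc ((M : ℝ) - T.card - y) * colWeight ρ H T ≤ M * colWeight ρ H T := by
            apply mul_le_mul_of_nonneg_right _ (hw T)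
            have : (0 : ℝ) ≤ T.card := by positivity
            linarith
        _ ≤ M * (N ^ M * (L ^ T.card * V)) := by gcongr; exact hub T
        _ ≤ _ := by gcongr
  have hfin := Finset.sum_le_sum (s := Finset.univ) fun T _ => hterm T
  rw [Finset.sum_add_distrib, Finset.sum_ite_eq' Finset.univ T₀] at hfin
  simp only [Finset.mem_univ, if_true, Finset.sum_const, Finset.card_univ, Fintype.card_finset,
    Fintype.card_fin, nsmul_eq_mul] at hfin
  obtain ⟨k', rfl⟩ : ∃ k', k = k' + 1 := ⟨k - 1, by omega⟩
  have hMf : (0 : ℝ) < M.factorial := by exact_mod_cast M.factorial_pos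
  have hX : 0 < L ^ k' * V / M.factorial := by positivity
  have hfac : -δ * (L ^ (k' + 1) * V / M.factorial) +
      ((2 ^ M : ℕ) : ℝ) * (M * (N ^ M * (L ^ (k' + 1 - 1) * V)))
      = (2 ^ M * (M * N ^ M) * M.factorial - δ * L) * (L ^ k' * V / M.factorial) := by
    push_cast
    field_simp
    ring
  rw [hfac] at hfin
  nlinarith

/-- The part of the Laplace expansion of the bordered minor (first row `i`, first column `j`)
that does not involve the entry `H i j`. -/
def restMinor {M N k : ℕ} (H : Matrix (Fin N) (Fin M) ℂ) (e : Fin k → Fin N) (g : Fin k → Fin M)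
    (i : Fin N) (j : Fin M) : ℂ :=
  ∑ l : Fin k, (-1) ^ ((l.succ : Fin (k + 1)) : ℕ) * H i (g l) *
    (H.submatrix e ((Fin.cons j g : Fin (k + 1) → Fin M) ∘ l.succ.succAbove)).det

lemma det_bordered {M N k : ℕ} (H : Matrix (Fin N) (Fin M) ℂ) (e : Fin k → Fin N)
    (g : Fin k → Fin M) (i : Fin N) (j : Fin M) :
    (H.submatrix (Fin.cons i e : Fin (k + 1) → Fin N) (Fin.cons j g : Fin (k + 1) → Fin M)).det
      = H i j * (H.submatrix e g).det + restMinor H e g i j := by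
  rw [det_succ_row_zero, Fin.sum_univ_succ, restMinor]
  congr 1
  have : (H.submatrix (Fin.cons i e : Fin (k + 1) → Fin N)
      (Fin.cons j g : Fin (k + 1) → Fin M)).submatrix Fin.succ (Fin.succAbove 0)
      = H.submatrix e g := by
    ext a b
    simp
  rw [this]
  simp

/-- The maximal minor pins each entry outside its rows and columns to a disc. -/
lemma pivot_entries {M N k : ℕ} {ρ L : ℝ} (hρ : 0 < ρ) (hL : 0 < L) (hk : k + 1 ≤ M)
    (H : Matrix (Fin N) (Fin M) ℂ) (e : Fin k → Fin N) (g : Fin k → Fin M)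
    (h1 : 1 ≤ minorWeight (ρ / L) H k e g)
    (hmax : ∀ k' ≤ M, ∀ (e' : Fin k' → Fin N) (g' : Fin k' → Fin M),
        minorWeight (ρ / L) H k' e' g' ≤ minorWeight (ρ / L) H k e g) (i : Fin N) (j : Fin M) :
    ‖H i j + restMinor H e g i j / (H.submatrix e g).det‖ ≤ √(L / ρ) := by
  have hD : (H.submatrix e g).det ≠ 0 := by
    intro h
    rw [minorWeight, h] at h1
    norm_num at h1
  have h := hmax (k + 1) hk (Fin.cons i e) (Fin.cons j g)
  rw [minorWeight, minorWeight, det_bordered, pow_succ, mul_assoc] at h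
  have h2 := le_of_mul_le_mul_left h (by positivity)
  have hD' : 0 < ‖(H.submatrix e g).det‖ := norm_pos_iff.mpr hD
  apply Real.le_sqrt_of_sq_le
  have h3 : H i j + restMinor H e g i j / (H.submatrix e g).det
      = (H i j * (H.submatrix e g).det + restMinor H e g i j) / (H.submatrix e g).det := by
    field_simp
  rw [h3, norm_div, div_pow, div_le_div_iff₀ (by positivity) hρ]
  rw [div_mul_eq_mul_div, div_le_iff₀ hL] at h2
  linarith

/-! ### Probability that a minor pins the remaining entries -/

instance (ι : Type*) [Fintype ι] : IsProbabilityMeasure (matrixLaw ι) := by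
  unfold matrixLaw; infer_instance

lemma gaussianPDFReal_half_le_one (x : ℝ) : gaussianPDFReal 0 (1 / 2) x ≤ 1 := by
  rw [gaussianPDFReal]
  have h1 : (√(2 * Real.pi * ((1 / 2 : NNReal) : ℝ)))⁻¹ ≤ 1 := by
    apply inv_le_one_of_one_le₀
    rw [Real.one_le_sqrt]
    push_cast
    nlinarith [Real.pi_gt_three]
  have h2 : Real.exp (-(x - 0) ^ 2 / (2 * ((1 / 2 : NNReal) : ℝ))) ≤ 1 := by
    rw [Real.exp_le_one_iff]
    apply div_nonpos_of_nonpos_of_nonneg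
    · nlinarith [sq_nonneg (x - 0)]
    · positivity
  exact mul_le_one₀ h1 (Real.exp_pos _).le h2

lemma gaussianReal_half_le_volume (s : Set ℝ) : gaussianReal 0 (1 / 2) s ≤ volume s := by
  rw [gaussianReal_apply 0 (by norm_num) s]
  calc _ ≤ ∫⁻ _ in s, 1 := by
        apply lintegral_mono
        intro x
        rw [gaussianPDF_def, ← ENNReal.ofReal_one]
        exact ENNReal.ofReal_le_ofReal (gaussianPDFReal_half_le_one x)
    _ = _ := by simp

/-- The closed square of half-side `t` around `c`. -/
def square (c : ℝ × ℝ) (t : ℝ) : Set (ℝ × ℝ) :=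
  Set.Icc (c.1 - t) (c.1 + t) ×ˢ Set.Icc (c.2 - t) (c.2 + t)

lemma entryLaw_square_le (c : ℝ × ℝ) {t : ℝ} (ht : 0 ≤ t) :
    entryLaw (square c t) ≤ ENNReal.ofReal (4 * t ^ 2) := by
  rw [entryLaw, square, Measure.prod_prod]
  have h : ∀ a : ℝ, gaussianReal 0 (1 / 2) (Set.Icc (a - t) (a + t)) ≤ ENNReal.ofReal (2 * t) := by
    intro a
    refine (gaussianReal_half_le_volume _).trans ?_
    rw [Real.volume_Icc]
    apply ENNReal.ofReal_le_ofReal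
    linarith
  calc _ ≤ ENNReal.ofReal (2 * t) * ENNReal.ofReal (2 * t) := mul_le_mul' (h _) (h _)
    _ = _ := by
      rw [← ENNReal.ofReal_mul (by positivity)]
      congr 1
      ring

/-- Conditioning on the entries outside `p`: if these confine each entry in `p` to a square of
half-side `t`, then the event has probability at most `(4 t ^ 2) ^ #p`. -/
lemma matrixLaw_le_of_confined {ι : Type*} [Fintype ι] (p : ι → Prop) [DecidablePred p]
    (E : Set (ι → ℝ × ℝ)) (hE : MeasurableSet E) {t : ℝ} (ht : 0 ≤ t)
    (c : (ι → ℝ × ℝ) → ι → ℝ × ℝ)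
    (hc : ∀ ω ω', (∀ x, ¬ p x → ω x = ω' x) → c ω = c ω')
    (h : ∀ ω ∈ E, ∀ x, p x → ω x ∈ square (c ω x) t) :
    matrixLaw ι E ≤ ENNReal.ofReal (4 * t ^ 2) ^ Fintype.card {x // p x} := by
  classical
  let eqv := MeasurableEquiv.piEquivPiSubtypeProd (fun _ : ι => ℝ × ℝ) p
  have hmp := (measurePreserving_piEquivPiSubtypeProd (fun _ : ι => entryLaw) p).symm
  have hEq : matrixLaw ι E = ((Measure.pi fun _ : Subtype p => entryLaw).prod
      (Measure.pi fun _ : {x // ¬ p x} => entryLaw)) (eqv.symm ⁻¹' E) := by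
    rw [hmp.measure_preimage hE.nullMeasurableSet]
    rfl
  have hout : ∀ (x : Subtype p → ℝ × ℝ) (y : {x // ¬ p x} → ℝ × ℝ) (i : ι) (hi : ¬ p i),
      eqv.symm (x, y) i = y ⟨i, hi⟩ := fun x y i hi => dif_neg hi
  have hin : ∀ (x : Subtype p → ℝ × ℝ) (y : {x // ¬ p x} → ℝ × ℝ) (i : ι) (hi : p i),
      eqv.symm (x, y) i = x ⟨i, hi⟩ := fun x y i hi => dif_pos hi
  rw [hEq, Measure.prod_apply_symm (eqv.symm.measurable hE)]
  calc _ ≤ ∫⁻ _ : {x // ¬ p x} → ℝ × ℝ, ENNReal.ofReal (4 * t ^ 2) ^ Fintype.card {x // p x}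
          ∂(Measure.pi fun _ : {x // ¬ p x} => entryLaw) := by
        apply lintegral_mono
        intro y
        have hsub : (fun x => (x, y)) ⁻¹' (eqv.symm ⁻¹' E) ⊆
            Set.univ.pi fun i : Subtype p => square (c (eqv.symm (0, y)) i) t := by
          intro x hx i _
          have h1 := h _ hx i i.2
          rw [hin x y i i.2] at h1
          rwa [hc (eqv.symm (x, y)) (eqv.symm (0, y))
            (fun j hj => by rw [hout _ _ _ hj, hout _ _ _ hj])] at h1
        refine (measure_mono hsub).trans ?_
        rw [Measure.pi_pi]
        refine (Finset.prod_le_prod' fun i _ => entryLaw_square_le _ ht).trans ?_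
        simp
    _ = _ := by simp

lemma continuous_toC : Continuous toC := by
  have : toC = fun p : ℝ × ℝ => (p.1 : ℂ) + (p.2 : ℂ) * Complex.I := by
    funext p
    apply Complex.ext <;> simp [toC]
  rw [this]
  fun_prop

lemma continuous_chan (M N : ℕ) : Continuous (chan M N) := by
  apply continuous_pi
  intro i
  apply continuous_pi
  intro j
  exact continuous_toC.comp (continuous_apply _)

lemma continuous_minor {M N k : ℕ} (e : Fin k → Fin N) (g : Fin k → Fin M) :
    Continuous fun ω => ((chan M N ω).submatrix e g).det :=
  ((continuous_chan M N).matrix_submatrix e g).matrix_det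

lemma continuous_restMinor {M N k : ℕ} (e : Fin k → Fin N) (g : Fin k → Fin M) (i : Fin N)
    (j : Fin M) : Continuous fun ω => restMinor (chan M N ω) e g i j := by
  unfold restMinor
  refine continuous_finsetSum _ fun l _ => ?_
  refine Continuous.mul (continuous_const.mul ?_) (continuous_minor e _)
  exact continuous_toC.comp (continuous_apply _)

/-- The event that the minor `(e, g)` pins the entries outside its rows and columns to discs of
radius `t`. -/
def pinned (M N : ℕ) {k : ℕ} (t : ℝ) (e : Fin k → Fin N) (g : Fin k → Fin M) :
    Set (Fin N × Fin M → ℝ × ℝ) :=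
  {ω | ∀ i j, ‖chan M N ω i j +
    restMinor (chan M N ω) e g i j / ((chan M N ω).submatrix e g).det‖ ≤ t}

lemma measurableSet_pinned (M N : ℕ) {k : ℕ} (t : ℝ) (e : Fin k → Fin N) (g : Fin k → Fin M) :
    MeasurableSet (pinned M N t e g) := by
  unfold pinned
  simp only [Set.ofPred_forall]
  refine MeasurableSet.iInter fun i => MeasurableSet.iInter fun j => ?_
  refine measurableSet_le (Measurable.norm ?_) measurable_const
  refine Measurable.add ?_ (Measurable.div ?_ ?_)
  · exact (continuous_toC.comp (continuous_apply (i, j))).measurable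
  · exact (continuous_restMinor e g i j).measurable
  · exact (continuous_minor e g).measurable

lemma matrixLaw_pinned_le {M N k : ℕ} {t : ℝ} (ht : 0 ≤ t) (ht1 : 4 * t ^ 2 ≤ 1)
    (e : Fin k → Fin N) (g : Fin k → Fin M) :
    matrixLaw (Fin N × Fin M) (pinned M N t e g) ≤
      ENNReal.ofReal (4 * t ^ 2) ^ ((N - k) * (M - k)) := by
  classical
  let p : Fin N × Fin M → Prop := fun x => x.1 ∉ Finset.univ.image e ∧ x.2 ∉ Finset.univ.image g
  let z : (Fin N × Fin M → ℝ × ℝ) → Fin N × Fin M → ℂ := fun ω x =>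
    -(restMinor (chan M N ω) e g x.1 x.2 / ((chan M N ω).submatrix e g).det)
  have hz : ∀ ω ω', (∀ x, ¬ p x → ω x = ω' x) → z ω = z ω' := by
    intro ω ω' hω
    have hrow : ∀ a j, chan M N ω (e a) j = chan M N ω' (e a) j := by
      intro a j
      simp only [chan, of_apply]
      rw [hω _ (by simp [p])]
    have hcol : ∀ i a, chan M N ω i (g a) = chan M N ω' i (g a) := by
      intro i a
      simp only [chan, of_apply]
      rw [hω _ (by simp [p])]
    have hsub : ∀ g' : Fin k → Fin M,
        (chan M N ω).submatrix e g' = (chan M N ω').submatrix e g' := by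
      intro g'
      ext a b
      exact hrow a (g' b)
    funext x
    simp only [z, restMinor, hsub, hcol]
  have hmain := matrixLaw_le_of_confined p (pinned M N t e g) (measurableSet_pinned M N t e g) ht
    (fun ω x => ((z ω x).re, (z ω x).im))
    (fun ω ω' hω => by rw [hz ω ω' hω])
    (by
      rintro ω hω ⟨i, j⟩ -
      have h := hω i j
      have h' : ‖chan M N ω i j - z ω (i, j)‖ ≤ t := by simpa [z] using h
      have hre := (Complex.abs_re_le_norm _).trans h'
      have him := (Complex.abs_im_le_norm _).trans h'
      rw [Complex.sub_re, abs_le] at hre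
      rw [Complex.sub_im, abs_le] at him
      simp only [chan, of_apply, toC] at hre him
      refine ⟨⟨?_, ?_⟩, ⟨?_, ?_⟩⟩ <;> dsimp only <;> linarith)
  refine hmain.trans ?_
  apply pow_le_pow_right_of_le_one'
  · rw [← ENNReal.ofReal_one]; exact ENNReal.ofReal_le_ofReal ht1
  · have hcard : Fintype.card {x // p x} =
        (Finset.univ.image e)ᶜ.card * (Finset.univ.image g)ᶜ.card := by
      rw [← Finset.card_product, Fintype.card_subtype]
      congr 1
      ext x
      simp [p]
    rw [hcard, Finset.card_compl, Finset.card_compl]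
    have h1 : (Finset.univ.image e).card ≤ k := by
      simpa using Finset.card_image_le (s := Finset.univ) (f := e)
    have h2 : (Finset.univ.image g).card ≤ k := by
      simpa using Finset.card_image_le (s := Finset.univ) (f := g)
    simp only [Fintype.card_fin]
    gcongr

/-! ### Polynomial bounds on the outage probability -/

/-- Union bound over the pivots of size at most `r`. The hypothesis `hr` says that column sets with
more than `r` elements contribute negatively in `outage_imp_error`. -/
lemma Pout_upper {M N r : ℕ} (hN : 1 ≤ N) (R : ℝ) (hrM : r + 1 ≤ M)
    (hr : (M : ℝ) - (r + 1 : ℕ) < M * 2 ^ (-(R / M))) :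
    ∃ C : ℝ, 0 < C ∧ ∀ᶠ ρ : ℝ in atTop, Pout M N R ρ ≤ C / ρ ^ ((N - r) * (M - r)) := by
  set y : ℝ := M * 2 ^ (-(R / M)) with hy
  have hy0 : 0 ≤ y := by positivity
  set δ : ℝ := y - ((M : ℝ) - (r + 1 : ℕ)) with hδ
  have hδ0 : 0 < δ := by linarith
  set B : ℝ := 2 ^ M * (M * N ^ M) * M.factorial with hB
  have hB0 : 0 ≤ B := by positivity
  set L : ℝ := 1 + (B + 1) / δ with hL
  have hL1 : 1 ≤ L := by
    have : 0 ≤ (B + 1) / δ := by positivity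
    linarith
  have hL0 : 0 < L := by linarith
  have hBL : B < δ * L := by
    have : δ * L = δ + (B + 1) := by rw [hL]; field_simp
    linarith
  set n := (N - r) * (M - r) with hn
  set S : ℝ := ∑ k ∈ Finset.range (r + 1), ((N : ℝ) ^ k * (M : ℝ) ^ k) with hS
  have hS0 : 0 ≤ S := by positivity
  refine ⟨(S + 1) * (4 * L) ^ n, by positivity, ?_⟩
  filter_upwards [eventually_ge_atTop (4 * L)] with ρ hρ
  have hρ0 : 0 < ρ := by linarith
  set t := √(L / ρ) with ht
  have ht2 : 4 * t ^ 2 = 4 * L / ρ := by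
    rw [ht, Real.sq_sqrt (by positivity)]; ring
  have ht1 : 4 * t ^ 2 ≤ 1 := by
    rw [ht2, div_le_one hρ0]; exact hρ
  have hsub : {ω | ∑ k : Fin M, Real.logb 2 (1 + sinr M N ρ ω k) < R} ⊆
      ⋃ k ∈ Finset.range (r + 1), ⋃ (e : Fin k → Fin N), ⋃ (g : Fin k → Fin M),
        pinned M N t e g := by
    intro ω hω
    have hout := outage_imp_error (by omega) hρ0.le ω hω
    obtain ⟨k, hk, e, g, h1, hmax⟩ := exists_max_minor (ρ / L) (chan M N ω)
    have hkr := pivot_rank_le (r := r) hN hρ0 hL1 hδ0 hy0 (by rw [hδ]; linarith) hBL _ hout hk e g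
      h1 hmax
    simp only [Set.mem_iUnion, Finset.mem_range]
    exact ⟨k, by omega, e, g, fun i j =>
      pivot_entries hρ0 hL0 (by omega) _ e g h1 hmax i j⟩
  have hμ : matrixLaw (Fin N × Fin M) {ω | ∑ k : Fin M, Real.logb 2 (1 + sinr M N ρ ω k) < R} ≤
      ENNReal.ofReal (S * (4 * L / ρ) ^ n) := by
    refine (measure_mono hsub).trans ?_
    refine (measure_biUnion_finset_le _ _).trans ?_
    calc _ ≤ ∑ k ∈ Finset.range (r + 1), ∑ e : Fin k → Fin N, ∑ g : Fin k → Fin M,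
          ENNReal.ofReal (4 * L / ρ) ^ n := by
          refine Finset.sum_le_sum fun k hk => ?_
          refine (measure_iUnion_fintype_le _ _).trans (Finset.sum_le_sum fun e _ => ?_)
          refine (measure_iUnion_fintype_le _ _).trans (Finset.sum_le_sum fun g _ => ?_)
          refine (matrixLaw_pinned_le (Real.sqrt_nonneg _) ht1 e g).trans ?_
          rw [← ht2]
          apply pow_le_pow_right_of_le_one'
          · rw [← ENNReal.ofReal_one]; exact ENNReal.ofReal_le_ofReal ht1
          · rw [Finset.mem_range] at hk
            rw [hn]
            apply Nat.mul_le_mul <;> omega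
      _ = _ := by
          simp only [Finset.sum_const, Finset.card_univ, Fintype.card_fun, Fintype.card_fin,
            nsmul_eq_mul]
          rw [ENNReal.ofReal_mul hS0, hS, ENNReal.ofReal_sum_of_nonneg (fun _ _ => by positivity),
            Finset.sum_mul, ENNReal.ofReal_pow (by positivity)]
          refine Finset.sum_congr rfl fun k _ => ?_
          rw [ENNReal.ofReal_mul (by positivity), ENNReal.ofReal_pow (by positivity),
            ENNReal.ofReal_pow (by positivity), ENNReal.ofReal_natCast, ENNReal.ofReal_natCast]
          push_cast
          ring
  calc Pout M N R ρ ≤ S * (4 * L / ρ) ^ n := ENNReal.toReal_le_of_le_ofReal (by positivity) hμ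
    _ ≤ (S + 1) * (4 * L / ρ) ^ n := by gcongr; linarith
    _ = _ := by rw [div_pow]; ring

lemma Pout_le_one (M N : ℕ) (R ρ : ℝ) : Pout M N R ρ ≤ 1 := by
  unfold Pout
  exact ENNReal.toReal_le_of_le_ofReal zero_le_one (by simpa using prob_le_one)

lemma exists_gaussianReal_lower : ∃ c : ℝ, 0 < c ∧ ∀ t : ℝ, 0 ≤ t → t ≤ 1 →
    ENNReal.ofReal (c * t) ≤ gaussianReal 0 (1 / 2) (Set.Icc (-t) t) := by
  refine ⟨gaussianPDFReal 0 (1 / 2) 1 * 2, mul_pos (gaussianPDFReal_pos _ _ _ (by norm_num))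
    two_pos, fun t ht ht1 => ?_⟩
  rw [gaussianReal_apply 0 (by norm_num)]
  calc ENNReal.ofReal (gaussianPDFReal 0 (1 / 2) 1 * 2 * t)
      = ∫⁻ _ in Set.Icc (-t) t, gaussianPDF 0 (1 / 2) 1 := by
        rw [setLIntegral_const, Real.volume_Icc, gaussianPDF_def,
          ← ENNReal.ofReal_mul (gaussianPDFReal_nonneg _ _ _)]
        congr 1
        ring
    _ ≤ _ := by
        refine setLIntegral_mono' measurableSet_Icc fun x hx => ?_
        rw [gaussianPDF_def]
        apply ENNReal.ofReal_le_ofReal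
        have hx2 : (x - 0) ^ 2 ≤ (1 - 0 : ℝ) ^ 2 :=
          sq_le_sq' (by linarith [hx.1]) (by linarith [hx.2])
        unfold gaussianPDFReal
        refine mul_le_mul_of_nonneg_left (Real.exp_le_exp.mpr ?_) (by positivity)
        exact div_le_div_of_nonneg_right (neg_le_neg hx2) (by positivity)

/-- The outage event contains a neighbourhood of `H = 0` of radius of order `ρ ^ (-1/2)`. -/
lemma exists_outage_box (M N : ℕ) {R : ℝ} (hR : 0 < R) : ∃ δ : ℝ, 0 < δ ∧ ∀ ρ : ℝ, 0 < ρ →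
    ∀ ω : Fin N × Fin M → ℝ × ℝ, (∀ x, ‖ω x‖ ≤ δ / √ρ) →
      ∑ k : Fin M, Real.logb 2 (1 + sinr M N ρ ω k) < R := by
  have hcont : Continuous fun ω : Fin N × Fin M → ℝ × ℝ =>
      (M : ℝ) * Real.logb 2 (∑ T, colWeight 1 (chan M N ω) T) := by
    have h1 : Continuous fun ω : Fin N × Fin M → ℝ × ℝ => ∑ T, colWeight 1 (chan M N ω) T := by
      unfold colWeight
      refine continuous_finsetSum _ fun T _ => continuous_const.mul ?_
      refine continuous_finsetSum _ fun e _ => ?_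
      exact (((continuous_chan M N).matrix_submatrix e _).matrix_det).norm.pow 2
    refine continuous_const.mul ?_
    have : ∀ ω : Fin N × Fin M → ℝ × ℝ, ∑ T, colWeight 1 (chan M N ω) T ≠ 0 := fun ω => by
      have := one_le_sum_colWeight zero_le_one (chan M N ω)
      linarith
    simp only [Real.logb]
    exact (h1.log this).div_const _
  have h0 : (M : ℝ) * Real.logb 2 (∑ T, colWeight 1 (chan M N 0) T) = 0 := by
    have : ∑ T, colWeight 1 (chan M N 0) T = 1 := by
      rw [Finset.sum_eq_single ∅, colWeight_empty]
      · intro T _ hT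
        have hne : Nonempty T := Finset.nonempty_coe_sort.mpr (Finset.nonempty_iff_ne_empty.mpr hT)
        have hch : chan M N 0 = 0 := by
          ext i j
          apply Complex.ext <;> simp [chan, toC]
        simp [colWeight, hch]
      · simp
    rw [this]; simp
  have hev := (hcont.tendsto 0).eventually (gt_mem_nhds (by rw [h0]; exact hR))
  obtain ⟨δ', hδ', hball⟩ := Metric.eventually_nhds_iff.mp hev
  refine ⟨δ' / 2, by positivity, fun ρ hρ ω hω => ?_⟩
  have hsρ : 0 < √ρ := Real.sqrt_pos.mpr hρ
  have hscale : ∀ T, colWeight ρ (chan M N ω) T = colWeight 1 (chan M N (√ρ • ω)) T := by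
    intro T
    have hch : chan M N (√ρ • ω) = (√ρ : ℂ) • chan M N ω := by
      ext i j
      apply Complex.ext <;> simp [chan, toC]
    have : ∀ e : T → Fin N, ‖((chan M N (√ρ • ω)).submatrix e (Subtype.val : T → Fin M)).det‖ ^ 2
        = ρ ^ T.card * ‖((chan M N ω).submatrix e (Subtype.val : T → Fin M)).det‖ ^ 2 := by
      intro e
      have : (chan M N (√ρ • ω)).submatrix e (Subtype.val : T → Fin M)
          = (√ρ : ℂ) • (chan M N ω).submatrix e (Subtype.val : T → Fin M) := by
        rw [hch]; rfl
      rw [this, det_smul, norm_mul, norm_pow, Fintype.card_coe, mul_pow, ← pow_mul, mul_comm _ 2,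
        pow_mul, Complex.norm_real, Real.norm_eq_abs, sq_abs, Real.sq_sqrt hρ.le]
    simp_rw [colWeight, this, ← Finset.mul_sum, one_pow]
    ring
  have hb := hball (y := √ρ • ω) (by
    rw [dist_zero_right, norm_smul, Real.norm_eq_abs, abs_of_pos hsρ]
    have : ‖ω‖ ≤ δ' / 2 / √ρ := (pi_norm_le_iff_of_nonneg (by positivity)).mpr hω
    rw [le_div_iff₀ hsρ] at this
    linarith)
  simp_rw [← hscale] at hb
  refine lt_of_le_of_lt ?_ hb
  set Z := ∑ T, colWeight ρ (chan M N ω) T with hZ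
  have hZ1 : 1 ≤ Z := one_le_sum_colWeight hρ.le _
  calc _ ≤ ∑ _k : Fin M, Real.logb 2 Z := by
        refine Finset.sum_le_sum fun i _ => ?_
        have hnum : 1 ≤ ∑ T, if i ∈ T then 0 else colWeight ρ (chan M N ω) T := by
          have := Finset.single_le_sum
            (f := fun T => if i ∈ T then 0 else colWeight ρ (chan M N ω) T) (s := Finset.univ)
            (fun T _ => by split_ifs; exacts [le_rfl, colWeight_nonneg hρ.le _ T])
            (Finset.mem_univ ∅)
          simpa [colWeight_empty] using this
        have hs : 1 + sinr M N ρ ω i =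
            Z / ∑ T, if i ∈ T then 0 else colWeight ρ (chan M N ω) T := by
          unfold sinr
          rw [inv_diag]
          simp [Z]
        rw [hs]
        apply Real.logb_le_logb_of_le (by norm_num)
        · exact div_pos (by linarith) (by linarith)
        · exact div_le_self (by linarith) hnum
    _ = _ := by simp

lemma Pout_lower (M N : ℕ) {R : ℝ} (hR : 0 < R) : ∃ c : ℝ, 0 < c ∧ ∀ᶠ ρ : ℝ in atTop,
    c / ρ ^ (N * M) ≤ Pout M N R ρ := by
  obtain ⟨c, hc, hgauss⟩ := exists_gaussianReal_lower
  obtain ⟨δ, hδ, hbox⟩ := exists_outage_box M N hR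
  refine ⟨(c * δ) ^ (2 * (N * M)), by positivity, ?_⟩
  filter_upwards [eventually_gt_atTop 0, eventually_ge_atTop (δ ^ 2)] with ρ hρ hρδ
  set t := δ / √ρ with ht
  have hsρ : 0 < √ρ := Real.sqrt_pos.mpr hρ
  have ht0 : 0 ≤ t := by positivity
  have ht1 : t ≤ 1 := by
    rw [ht, div_le_one hsρ]
    exact Real.le_sqrt_of_sq_le hρδ
  have hsub : (Set.univ.pi fun _ => Set.Icc (-t) t ×ˢ Set.Icc (-t) t :
      Set (Fin N × Fin M → ℝ × ℝ)) ⊆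
      {ω | ∑ k : Fin M, Real.logb 2 (1 + sinr M N ρ ω k) < R} := by
    intro ω hω
    refine hbox ρ hρ ω fun x => ?_
    have hx := hω x (Set.mem_univ x)
    rw [Prod.norm_def]
    exact max_le (abs_le.mpr hx.1) (abs_le.mpr hx.2)
  have hμ : ENNReal.ofReal ((c * t) ^ (2 * (N * M))) ≤ matrixLaw (Fin N × Fin M)
      {ω | ∑ k : Fin M, Real.logb 2 (1 + sinr M N ρ ω k) < R} := by
    refine le_trans ?_ (measure_mono hsub)
    rw [matrixLaw, Measure.pi_pi]
    simp only [entryLaw, Measure.prod_prod, Finset.prod_const, Finset.card_univ,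
      Fintype.card_prod, Fintype.card_fin]
    rw [ENNReal.ofReal_pow (by positivity), pow_mul, sq]
    exact pow_le_pow_left' (mul_le_mul' (hgauss t ht0 ht1) (hgauss t ht0 ht1)) _
  have h2 := (ENNReal.ofReal_le_iff_le_toReal (measure_ne_top _ _)).mp hμ
  refine le_trans (le_of_eq ?_) h2
  rw [ht, mul_div_assoc', div_pow]
  congr 1
  rw [pow_mul √ρ, Real.sq_sqrt hρ.le]

/-- Polynomial bounds on both sides turn into a bound on the exponent. The lower bound, with
whatever exponent `m`, keeps the real-valued `limsup` from taking its junk value `0` at `-∞`. -/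
lemma limsup_log_div_log_le {P : ℝ → ℝ} {c C : ℝ} {m n : ℕ} (hc : 0 < c)
    (hlow : ∀ᶠ ρ : ℝ in atTop, c / ρ ^ m ≤ P ρ)
    (hup : ∀ᶠ ρ : ℝ in atTop, P ρ ≤ C / ρ ^ n) :
    limsup (fun ρ : ℝ => Real.log (P ρ) / Real.log ρ) atTop ≤ -(n : ℝ) := by
  have hlim : ∀ (a : ℝ) (k : ℕ), Tendsto (fun ρ : ℝ => a / Real.log ρ - k) atTop (nhds (-k)) := by
    intro a k
    have := (Real.tendsto_log_atTop.const_div_atTop a).sub_const (k : ℝ)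
    simpa using this
  have hlog : ∀ (a : ℝ) (k : ℕ) (ρ : ℝ), 0 < a → 1 < ρ →
      Real.log (a / ρ ^ k) / Real.log ρ = Real.log a / Real.log ρ - k := by
    intro a k ρ ha hρ
    have : 0 < Real.log ρ := Real.log_pos hρ
    rw [Real.log_div ha.ne' (by positivity), Real.log_pow]
    field_simp
  have hupper : (fun ρ : ℝ => Real.log (P ρ) / Real.log ρ) ≤ᶠ[atTop]
      fun ρ => Real.log C / Real.log ρ - n := by
    filter_upwards [hlow, hup, eventually_gt_atTop 1] with ρ h1 h2 hρ
    have hρ0 : 0 < ρ := by linarith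
    have hP : 0 < P ρ := lt_of_lt_of_le (by positivity) h1
    have hC : 0 < C := by
      have := lt_of_lt_of_le hP h2
      rwa [div_pos_iff_of_pos_right (by positivity)] at this
    rw [← hlog C n ρ hC hρ]
    have : 0 < Real.log ρ := Real.log_pos hρ
    gcongr
  have hlower : (fun ρ => Real.log c / Real.log ρ - m) ≤ᶠ[atTop]
      fun ρ : ℝ => Real.log (P ρ) / Real.log ρ := by
    filter_upwards [hlow, eventually_gt_atTop 1] with ρ h1 hρ
    have hρ0 : 0 < ρ := by linarith
    rw [← hlog c m ρ hc hρ]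
    have : 0 < Real.log ρ := Real.log_pos hρ
    gcongr
  have hbdd : IsBoundedUnder (· ≥ ·) atTop fun ρ : ℝ => Real.log (P ρ) / Real.log ρ :=
    (hlim _ m).isBoundedUnder_ge.mono_ge hlower
  calc _ ≤ limsup (fun ρ => Real.log C / Real.log ρ - n) atTop :=
        limsup_le_limsup hupper hbdd.isCoboundedUnder_le (hlim _ n).isBoundedUnder_le
    _ = _ := (hlim _ n).limsup_eq

/-- For every rate `R > 0`, the MMSE outage probability of the flat-fading MIMO channel
decays at least polynomially with exponent `d_out(R,M,N)`:
`limsup_{ρ→∞} log P_out(ρ) / log ρ ≤ −d_out(R,M,N)`. -/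
theorem mmse_outage_exponent_upper_bound (M N : ℕ) (hM : 1 ≤ M) (hN : 1 ≤ N)
    (R : ℝ) (hR : 0 < R) :
    limsup (fun ρ : ℝ => Real.log (Pout M N R ρ) / Real.log ρ) atTop
      ≤ -dOut R M N := by
  obtain ⟨c, hc, hlow⟩ := Pout_lower M N hR
  set x : ℝ := (M : ℝ) * 2 ^ (-(R / M)) - max ((M : ℝ) - N) 0 with hx
  obtain ⟨d, hd⟩ : ∃ d : ℕ, (⌈max x 0⌉ : ℤ) = d :=
    ⟨⌈max x 0⌉.toNat, (Int.toNat_of_nonneg (Int.ceil_nonneg (le_max_right _ _))).symm⟩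
  have hdOut : dOut R M N = (d : ℝ) ^ 2 + |(N : ℝ) - M| * d := by
    unfold dOut
    rw [← hx, hd]
    simp
  rw [hdOut]
  rcases Nat.eq_zero_or_pos d with rfl | hd0
  · have := limsup_log_div_log_le (C := 1) (n := 0) hc hlow
      (Eventually.of_forall fun ρ => by simpa using Pout_le_one M N R ρ)
    simpa using this
  have hdx : (d : ℝ) - 1 < x := by
    have h1 := Int.ceil_lt_add_one (max x 0)
    rw [hd] at h1
    have hd1 : (1 : ℝ) ≤ d := by exact_mod_cast hd0
    rcases le_total x 0 with h | h
    · rw [max_eq_right h] at h1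
      push_cast at h1
      linarith
    · rw [max_eq_left h] at h1
      push_cast at h1
      linarith
  have hM0 : (0 : ℝ) < M := by exact_mod_cast hM
  have hpow : (M : ℝ) * 2 ^ (-(R / M)) ≤ M := by
    apply mul_le_of_le_one_right hM0.le
    apply Real.rpow_le_one_of_one_le_of_nonpos (by norm_num)
    rw [neg_nonpos]
    positivity
  have hmax1 := le_max_left ((M : ℝ) - N) 0
  have hmax2 := le_max_right ((M : ℝ) - N) 0
  have hdM : d ≤ M := by
    have : (d : ℝ) < (M + 1 : ℕ) := by push_cast; linarith
    have : d < M + 1 := by exact_mod_cast this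
    omega
  have hdN : d ≤ N := by
    have : (d : ℝ) < (N + 1 : ℕ) := by push_cast; linarith
    have : d < N + 1 := by exact_mod_cast this
    omega
  -- the largest size of a maximal minor on the outage event
  set r := min M N - d with hr
  have hrM : r + 1 ≤ M := by omega
  have hr' : (M : ℝ) - (r + 1 : ℕ) < M * 2 ^ (-(R / M)) := by
    have hrd : r + d = min M N := by omega
    have : (r : ℝ) + d = min (M : ℝ) N := by exact_mod_cast hrd
    have hmm : (M : ℝ) - min (M : ℝ) N = max ((M : ℝ) - N) 0 := by
      rcases le_total (M : ℝ) N with h | h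
      · rw [min_eq_left h, max_eq_right (by linarith)]; ring
      · rw [min_eq_right h, max_eq_left (by linarith)]
    push_cast
    linarith
  obtain ⟨C, -, hup⟩ := Pout_upper hN R hrM hr'
  have hfin := limsup_log_div_log_le hc hlow hup
  have hexp : (((N - r) * (M - r) : ℕ) : ℝ) = (d : ℝ) ^ 2 + |(N : ℝ) - M| * d := by
    rcases le_total M N with h | h
    · have h1 : M - r = d := by omega
      have h2 : N - r = N - M + d := by omega
      rw [h1, h2, abs_of_nonneg (by rw [sub_nonneg]; exact_mod_cast h)]
      push_cast [Nat.cast_sub h]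
      ring
    · have h1 : N - r = d := by omega
      have h2 : M - r = M - N + d := by omega
      rw [h1, h2, abs_of_nonpos (by rw [sub_nonpos]; exact_mod_cast h)]
      push_cast [Nat.cast_sub h]
      ring
  rwa [hexp] at hfin

end
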